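/- (Proposition 1.) Let 𝒜, ℬ, 𝒞 be real numbers with 𝒜² − ℬ𝒞 = 1, and let q₀, p₀ be independent standard normal random variables. Define the energy error Δ(q₀,p₀) = (1/2)((𝒜q₀ + ℬp₀)² + (𝒞q₀ + 𝒜p₀)²) − (1/2)(q₀² + p₀²). Then 𝔼(Δ) = (1/2)(ℬ + 𝒞)². -/

import Mathlib

open MeasureTheory ProbabilityTheory

/-!
Since `A ^ 2 = 1 + B * C`, the energy error is `(B + C) / 2` times the quadratic form
`C * q ^ 2 + B * p ^ 2 + 2 * A * (q * p)`. The two squares have expectation `1` and the cross term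
has expectation `0`, so the form has expectation `B + C`.
-/

/-- The energy error `Δ` of the linear map `(q, p) ↦ (A q + B p, C q + A p)` for the Hamiltonian
`(q ^ 2 + p ^ 2) / 2`: the energy of the image of `(q, p)` minus the energy of `(q, p)`. -/
noncomputable def energyError (A B C q p : ℝ) : ℝ :=
  (1 / 2) * ((A * q + B * p) ^ 2 + (C * q + A * p) ^ 2) - (1 / 2) * (q ^ 2 + p ^ 2)

lemma energyError_eq_mul {A B C : ℝ} (hvol : A ^ 2 - B * C = 1) (q p : ℝ) :
    energyError A B C q p =
      (B + C) / 2 * (C * q ^ 2 + B * p ^ 2 + 2 * A * (q * p)) := by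
  rw [energyError]
  linear_combination (q ^ 2 + p ^ 2) / 2 * hvol

section Moments

variable {Ω : Type*} [MeasurableSpace Ω] {μ : Measure Ω} {X Y : Ω → ℝ}

lemma integral_quadratic_form (hX : MemLp X 2 μ) (hY : MemLp Y 2 μ) (a b c : ℝ) :
    ∫ ω, (a * X ω ^ 2 + b * Y ω ^ 2 + c * (X ω * Y ω)) ∂μ =
      a * ∫ ω, X ω ^ 2 ∂μ + b * ∫ ω, Y ω ^ 2 ∂μ + c * ∫ ω, X ω * Y ω ∂μ := by
  have hXX : Integrable (fun ω ↦ a * X ω ^ 2) μ := hX.integrable_sq.const_mul a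
  have hYY : Integrable (fun ω ↦ b * Y ω ^ 2) μ := hY.integrable_sq.const_mul b
  have hXY : Integrable (fun ω ↦ c * (X ω * Y ω)) μ := (hX.integrable_mul hY).const_mul c
  have hsquares : Integrable (fun ω ↦ a * X ω ^ 2 + b * Y ω ^ 2) μ := hXX.add hYY
  rw [integral_add hsquares hXY, integral_add hXX hYY]
  simp only [integral_const_mul]

theorem expected_energy_error_general {A B C : ℝ} (hvol : A ^ 2 - B * C = 1)
    (hX : MemLp X 2 μ) (hY : MemLp Y 2 μ) (hXX : ∫ ω, X ω ^ 2 ∂μ = 1)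
    (hYY : ∫ ω, Y ω ^ 2 ∂μ = 1) (hXY : ∫ ω, X ω * Y ω ∂μ = 0) :
    ∫ ω, energyError A B C (X ω) (Y ω) ∂μ = (1 / 2) * (B + C) ^ 2 :=
  calc
    ∫ ω, energyError A B C (X ω) (Y ω) ∂μ
      = (B + C) / 2 * ∫ ω, (C * X ω ^ 2 + B * Y ω ^ 2 + 2 * A * (X ω * Y ω)) ∂μ := by
        simp only [energyError_eq_mul hvol, integral_const_mul]
    _ = (B + C) / 2 * (C * 1 + B * 1 + 2 * A * 0) := by
        rw [integral_quadratic_form hX hY, hXX, hYY, hXY]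
    _ = (1 / 2) * (B + C) ^ 2 := by ring

end Moments

lemma integral_sq_gaussianReal (m : ℝ) (v : NNReal) :
    ∫ x, x ^ 2 ∂gaussianReal m v = v + m ^ 2 := by
  have hvar := variance_eq_sub (memLp_id_gaussianReal (μ := m) (v := v) 2)
  simp only [variance_id_gaussianReal, Pi.pow_apply, id_eq, integral_id_gaussianReal] at hvar
  linarith

/-- Proposition 1: with `𝒜² - ℬ𝒞 = 1` and `q₀, p₀` independent standard normals,
the expected energy error is `𝔼(Δ) = (1/2)(ℬ + 𝒞)²`. -/
theorem expected_energy_error (A B C : ℝ) (hvol : A ^ 2 - B * C = 1) :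
    ∫ x : ℝ × ℝ,
        ((1 / 2) * ((A * x.1 + B * x.2) ^ 2 + (C * x.1 + A * x.2) ^ 2) -
          (1 / 2) * (x.1 ^ 2 + x.2 ^ 2))
        ∂((gaussianReal 0 1).prod (gaussianReal 0 1)) =
      (1 / 2) * (B + C) ^ 2 := by
  have hL2 : MemLp id 2 (gaussianReal 0 1) := memLp_id_gaussianReal 2
  exact expected_energy_error_general hvol (hL2.comp_fst _) (hL2.comp_snd _)
    (by simp [integral_fun_fst (fun q : ℝ ↦ q ^ 2), integral_sq_gaussianReal])
    (by simp [integral_fun_snd (fun p : ℝ ↦ p ^ 2), integral_sq_gaussianReal])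
    (by simp [integral_prod_mul (fun q : ℝ ↦ q) (fun p : ℝ ↦ p)])
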